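/- Let ρ_AB = Σ_j p_j · α_j ⊗ β_j be a separable density matrix on ℂ^{d_A} ⊗ ℂ^{d_B} (a finite convex combination, with p_j ≥ 0, Σ_j p_j = 1, α_j, β_j density matrices) whose reduced state ρ_B = Tr_A ρ_AB is positive definite. Then Tr[ρ̃_AB²] ≤ 1, where ρ̃_AB = (I_A ⊗ ρ_B^{−1/4}) ρ_AB (I_A ⊗ ρ_B^{−1/4}); equivalently, the conditional Rényi 2-entropy H₂(A|B) = −log₂ Tr[ρ̃_AB²] is nonnegative for separable states. -/

import Mathlib

open Matrix BigOperators ComplexOrder Kronecker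

noncomputable section

/-- Partial trace over the first (A) tensor factor. -/
def ptraceA {dA dB : ℕ} (ρ : Matrix (Fin dA × Fin dB) (Fin dA × Fin dB) ℂ) :
    Matrix (Fin dB) (Fin dB) ℂ :=
  Matrix.of fun i j => ∑ a : Fin dA, ρ (a, i) (a, j)

/-- `ρ_B^v = Tr_A[(|v⟩⟨v| ⊗ I_B) ρ]`. -/
def condB {dA dB : ℕ} (ρ : Matrix (Fin dA × Fin dB) (Fin dA × Fin dB) ℂ)
    (v : Fin dA → ℂ) : Matrix (Fin dB) (Fin dB) ℂ :=
  ptraceA (((vecMulVec v (star v)) ⊗ₖ (1 : Matrix (Fin dB) (Fin dB) ℂ)) * ρ)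

/-- Real power of a Hermitian matrix, via the spectral decomposition (junk value `0`
on non-Hermitian matrices). -/
def mpow {n : Type*} [Fintype n] [DecidableEq n] (M : Matrix n n ℂ) (r : ℝ) :
    Matrix n n ℂ :=
  if h : M.IsHermitian then
    (h.eigenvectorUnitary : Matrix n n ℂ) *
      Matrix.diagonal (fun i => ((h.eigenvalues i ^ r : ℝ) : ℂ)) *
      star (h.eigenvectorUnitary : Matrix n n ℂ)
  else 0

/-- `ρ̃_AB = (I_A ⊗ ρ_B^{-1/4}) ρ_AB (I_A ⊗ ρ_B^{-1/4})`. -/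
def tildeRho {dA dB : ℕ} (ρ : Matrix (Fin dA × Fin dB) (Fin dA × Fin dB) ℂ) :
    Matrix (Fin dA × Fin dB) (Fin dA × Fin dB) ℂ :=
  ((1 : Matrix (Fin dA) (Fin dA) ℂ) ⊗ₖ mpow (ptraceA ρ) (-(1/4 : ℝ))) * ρ *
    ((1 : Matrix (Fin dA) (Fin dA) ℂ) ⊗ₖ mpow (ptraceA ρ) (-(1/4 : ℝ)))

/-- The pretty-good guessing probability term for a single basis vector `v`:
`Tr[ρ_B^{-1/2} ρ_B^v ρ_B^{-1/2} ρ_B^v]`. -/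
def pgTerm {dA dB : ℕ} (ρ : Matrix (Fin dA × Fin dB) (Fin dA × Fin dB) ℂ)
    (v : Fin dA → ℂ) : ℂ :=
  (mpow (ptraceA ρ) (-(1/2 : ℝ)) * condB ρ v * mpow (ptraceA ρ) (-(1/2 : ℝ)) *
    condB ρ v).trace

end

/-!
Taking the partial trace of two separable operators can only increase their Hilbert–Schmidt
pairing: on product operators this is `Tr(A C) ≤ Tr A · Tr C`, and both sides are biadditive.
The operator `ρ̃` is again separable, and its partial trace is
`ρ_B^{-1/4} ρ_B ρ_B^{-1/4} = ρ_B^{1/2}`, so `Tr ρ̃² ≤ Tr (ρ_B^{1/2})² = Tr ρ_B = Tr ρ`.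
-/

noncomputable section

section TraceInequalities

variable {n 𝕜 : Type*} [Fintype n] [RCLike 𝕜] {A B : Matrix n n 𝕜}

open scoped MatrixOrder

lemma trace_mul_nonneg_of_posSemidef (hA : A.PosSemidef) (hB : B.PosSemidef) :
    0 ≤ (A * B).trace := by
  classical
  obtain ⟨C, rfl⟩ := CStarAlgebra.nonneg_iff_eq_star_mul_self.mp hA.nonneg
  rw [star_eq_conjTranspose, trace_mul_cycle, trace_mul_cycle]
  exact (hB.mul_mul_conjTranspose_same C).trace_nonneg

lemma posSemidef_trace_smul_one_sub [DecidableEq n] (hA : A.PosSemidef) :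
    (A.trace • (1 : Matrix n n 𝕜) - A).PosSemidef := by
  have htrace : A.trace • (1 : Matrix n n 𝕜) = algebraMap ℝ _ (∑ i, hA.1.eigenvalues i) := by
    rw [hA.1.trace_eq_sum_eigenvalues, Algebra.algebraMap_eq_smul_one,
      RCLike.real_smul_eq_coe_smul (K := 𝕜), RCLike.ofReal_sum]
  rw [← le_iff, htrace]
  refine le_algebraMap_of_spectrum_le fun x hx => ?_
  obtain ⟨i, rfl⟩ := hA.1.spectrum_real_eq_range_eigenvalues ▸ hx
  exact Finset.single_le_sum (fun j _ => hA.eigenvalues_nonneg j) (Finset.mem_univ i)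

lemma trace_mul_le_trace_mul_trace (hA : A.PosSemidef) (hB : B.PosSemidef) :
    (A * B).trace ≤ A.trace * B.trace := by
  classical
  have h := trace_mul_nonneg_of_posSemidef (posSemidef_trace_smul_one_sub hA) hB
  rwa [sub_mul, trace_sub, smul_mul_assoc, one_mul, trace_smul, smul_eq_mul, sub_nonneg] at h

end TraceInequalities

section RealPowers

variable {n : Type*} [Fintype n] [DecidableEq n] {M : Matrix n n ℂ}

lemma mpow_eq_cfc (M : Matrix n n ℂ) (r : ℝ) : mpow M r = cfc (fun x : ℝ => x ^ r) M := by
  by_cases hM : M.IsHermitian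
  · rw [hM.cfc_eq, mpow, dif_pos hM]
    rfl
  · rw [mpow, dif_neg hM]
    exact (cfc_apply_of_not_predicate (p := IsSelfAdjoint) M hM).symm

lemma isHermitian_mpow (M : Matrix n n ℂ) (r : ℝ) : (mpow M r).IsHermitian := by
  rw [mpow_eq_cfc]
  exact cfc_predicate _ M

lemma mpow_one (hM : M.IsHermitian) : mpow M 1 = M := by
  simp only [mpow_eq_cfc, Real.rpow_one]
  exact cfc_id' ℝ M hM

lemma mpow_add (hM : M.PosDef) (r s : ℝ) : mpow M (r + s) = mpow M r * mpow M s := by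
  simp only [mpow_eq_cfc]
  rw [← cfc_mul _ _ M (M.finite_real_spectrum.continuousOn _)
    (M.finite_real_spectrum.continuousOn _)]
  refine cfc_congr fun x hx => Real.rpow_add ?_ r s
  obtain ⟨i, rfl⟩ := hM.1.spectrum_real_eq_range_eigenvalues ▸ hx
  exact hM.eigenvalues_pos i

end RealPowers

section PartialTrace

variable {dA dB : ℕ}

lemma ptraceA_zero : ptraceA (0 : Matrix (Fin dA × Fin dB) (Fin dA × Fin dB) ℂ) = 0 := by
  ext i j
  simp [ptraceA]

lemma ptraceA_add (X Y : Matrix (Fin dA × Fin dB) (Fin dA × Fin dB) ℂ) :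
    ptraceA (X + Y) = ptraceA X + ptraceA Y := by
  ext i j
  simp [ptraceA, Finset.sum_add_distrib]

lemma ptraceA_kronecker (A : Matrix (Fin dA) (Fin dA) ℂ) (B : Matrix (Fin dB) (Fin dB) ℂ) :
    ptraceA (A ⊗ₖ B) = A.trace • B := by
  ext i j
  simp [ptraceA, trace, Finset.sum_mul]

lemma trace_ptraceA (X : Matrix (Fin dA × Fin dB) (Fin dA × Fin dB) ℂ) :
    (ptraceA X).trace = X.trace := by
  simp only [ptraceA, trace, diag_apply, of_apply, Fintype.sum_prod_type_right]

lemma ptraceA_one_kronecker_mul (C : Matrix (Fin dB) (Fin dB) ℂ)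
    (X : Matrix (Fin dA × Fin dB) (Fin dA × Fin dB) ℂ) :
    ptraceA (((1 : Matrix (Fin dA) (Fin dA) ℂ) ⊗ₖ C) * X) = C * ptraceA X := by
  ext i j
  simp only [ptraceA, of_apply, mul_apply, kroneckerMap_apply, one_apply, ite_mul, one_mul,
    zero_mul, Fintype.sum_prod_type_right, Finset.sum_ite_eq, Finset.mem_univ, if_true,
    Finset.mul_sum]
  exact Finset.sum_comm

lemma ptraceA_mul_one_kronecker (X : Matrix (Fin dA × Fin dB) (Fin dA × Fin dB) ℂ)
    (C : Matrix (Fin dB) (Fin dB) ℂ) :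
    ptraceA (X * ((1 : Matrix (Fin dA) (Fin dA) ℂ) ⊗ₖ C)) = ptraceA X * C := by
  ext i j
  simp only [ptraceA, of_apply, mul_apply, kroneckerMap_apply, one_apply, ite_mul, one_mul,
    zero_mul, mul_ite, mul_zero, Fintype.sum_prod_type_right, Finset.sum_ite_eq',
    Finset.mem_univ, if_true, Finset.sum_mul]
  exact Finset.sum_comm

lemma ptraceA_tildeRho {ρ : Matrix (Fin dA × Fin dB) (Fin dA × Fin dB) ℂ}
    (hρB : (ptraceA ρ).PosDef) : ptraceA (tildeRho ρ) = mpow (ptraceA ρ) (1 / 2) := by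
  calc ptraceA (tildeRho ρ)
      = mpow (ptraceA ρ) (-(1 / 4)) * ptraceA ρ * mpow (ptraceA ρ) (-(1 / 4)) := by
        rw [tildeRho, ptraceA_mul_one_kronecker, ptraceA_one_kronecker_mul]
    _ = mpow (ptraceA ρ) (-(1 / 4) + 1 + -(1 / 4)) := by
        rw [mpow_add hρB, mpow_add hρB, mpow_one hρB.1]
    _ = mpow (ptraceA ρ) (1 / 2) := by norm_num

end PartialTrace

section Separable

variable {m n : Type*}

variable (m n) in
/-- The convex cone of separable (unnormalised) operators: the finite sums of Kronecker products
of positive semidefinite matrices. Closure under addition suffices, since a nonnegative weight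
can be absorbed into a factor. -/
def separableCone : AddSubmonoid (Matrix (m × n) (m × n) ℂ) :=
  AddSubmonoid.closure (Set.image2 (· ⊗ₖ ·) {A | A.PosSemidef} {B | B.PosSemidef})

lemma kronecker_mem_separableCone {A : Matrix m m ℂ} {B : Matrix n n ℂ} (hA : A.PosSemidef)
    (hB : B.PosSemidef) : A ⊗ₖ B ∈ separableCone m n :=
  AddSubmonoid.subset_closure (Set.mem_image2_of_mem hA hB)

lemma sum_smul_kronecker_mem_separableCone {J : Type*} [Fintype J] {p : J → ℝ}
    {α : J → Matrix m m ℂ} {β : J → Matrix n n ℂ} (hp : ∀ j, 0 ≤ p j)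
    (hα : ∀ j, (α j).PosSemidef) (hβ : ∀ j, (β j).PosSemidef) :
    ∑ j, (p j : ℂ) • (α j ⊗ₖ β j) ∈ separableCone m n := by
  refine sum_mem fun j _ => ?_
  rw [← smul_kronecker]
  exact kronecker_mem_separableCone ((hα j).smul (by exact_mod_cast hp j)) (hβ j)

lemma kronecker_conj_mem_separableCone {m' n' : Type*} [Fintype m] [Fintype n]
    [Finite m'] [Finite n'] {X : Matrix (m × n) (m × n) ℂ} (hX : X ∈ separableCone m n)
    (C : Matrix m' m ℂ) (D : Matrix n' n ℂ) :
    (C ⊗ₖ D) * X * (C ⊗ₖ D)ᴴ ∈ separableCone m' n' := by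
  induction hX using AddSubmonoid.closure_induction with
  | mem X hX =>
    obtain ⟨A, hA, B, hB, rfl⟩ := hX
    rw [conjTranspose_kronecker, ← mul_kronecker_mul, ← mul_kronecker_mul]
    exact kronecker_mem_separableCone (hA.mul_mul_conjTranspose_same C)
      (hB.mul_mul_conjTranspose_same D)
  | zero => simpa only [Matrix.mul_zero, Matrix.zero_mul] using zero_mem (separableCone m' n')
  | add X Y _ _ hX hY => simpa only [Matrix.mul_add, Matrix.add_mul] using add_mem hX hY

variable {dA dB : ℕ} {X Y ρ : Matrix (Fin dA × Fin dB) (Fin dA × Fin dB) ℂ}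

lemma trace_mul_le_trace_ptraceA_mul_ptraceA (hX : X ∈ separableCone (Fin dA) (Fin dB))
    (hY : Y ∈ separableCone (Fin dA) (Fin dB)) :
    (X * Y).trace ≤ (ptraceA X * ptraceA Y).trace := by
  induction hX, hY using AddSubmonoid.closure_induction₂ with
  | mem X Y hX hY =>
    obtain ⟨A, hA, B, hB, rfl⟩ := hX
    obtain ⟨C, hC, D, hD, rfl⟩ := hY
    calc ((A ⊗ₖ B) * (C ⊗ₖ D)).trace = (A * C).trace * (B * D).trace := by
          rw [← mul_kronecker_mul, trace_kronecker]
      _ ≤ A.trace * C.trace * (B * D).trace :=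
          mul_le_mul_of_nonneg_right (trace_mul_le_trace_mul_trace hA hC)
            (trace_mul_nonneg_of_posSemidef hB hD)
      _ = (ptraceA (A ⊗ₖ B) * ptraceA (C ⊗ₖ D)).trace := by
          rw [ptraceA_kronecker, ptraceA_kronecker, smul_mul_smul_comm, trace_smul, smul_eq_mul]
  | zero_left Y _ => simp only [ptraceA_zero, zero_mul, trace_zero, le_refl]
  | zero_right X _ => simp only [ptraceA_zero, mul_zero, trace_zero, le_refl]
  | add_left X₁ X₂ Y _ _ _ h₁ h₂ =>
    simpa only [ptraceA_add, add_mul, trace_add] using add_le_add h₁ h₂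
  | add_right X₁ X₂ Y _ _ _ h₁ h₂ =>
    simpa only [ptraceA_add, mul_add, trace_add] using add_le_add h₁ h₂

lemma tildeRho_mem_separableCone (hρ : ρ ∈ separableCone (Fin dA) (Fin dB)) :
    tildeRho ρ ∈ separableCone (Fin dA) (Fin dB) := by
  have h := kronecker_conj_mem_separableCone hρ (1 : Matrix (Fin dA) (Fin dA) ℂ)
    (mpow (ptraceA ρ) (-(1 / 4)))
  rwa [conjTranspose_kronecker, conjTranspose_one, (isHermitian_mpow _ _).eq] at h

end Separable

theorem separable_h2_nonneg_general {dA dB : ℕ}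
    {ρ : Matrix (Fin dA × Fin dB) (Fin dA × Fin dB) ℂ}
    (hρ : ρ ∈ separableCone (Fin dA) (Fin dB)) (hρB : (ptraceA ρ).PosDef) :
    (tildeRho ρ * tildeRho ρ).trace ≤ ρ.trace :=
  calc (tildeRho ρ * tildeRho ρ).trace
      ≤ (ptraceA (tildeRho ρ) * ptraceA (tildeRho ρ)).trace :=
        trace_mul_le_trace_ptraceA_mul_ptraceA (tildeRho_mem_separableCone hρ)
          (tildeRho_mem_separableCone hρ)
    _ = (ptraceA ρ).trace := by
        rw [ptraceA_tildeRho hρB, ← mpow_add hρB, add_halves, mpow_one hρB.1]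
    _ = ρ.trace := trace_ptraceA ρ

/-- for a separable density matrix `ρ_AB = Σ_j p_j α_j ⊗ β_j` with
`ρ_B` positive definite, `Tr[ρ̃_AB²] ≤ 1`, i.e. the conditional Rényi 2-entropy
`H₂(A|B) = −log₂ Tr[ρ̃_AB²]` is nonnegative. -/
theorem separable_h2_nonneg
    (dA dB : ℕ) (hdA : 1 ≤ dA) (hdB : 1 ≤ dB)
    (J : Type) [Fintype J]
    (p : J → ℝ) (hp : ∀ j, 0 ≤ p j) (hpsum : ∑ j, p j = 1)
    (α : J → Matrix (Fin dA) (Fin dA) ℂ)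
    (hα : ∀ j, (α j).PosSemidef) (hαtr : ∀ j, (α j).trace = 1)
    (β : J → Matrix (Fin dB) (Fin dB) ℂ)
    (hβ : ∀ j, (β j).PosSemidef) (hβtr : ∀ j, (β j).trace = 1)
    (ρ : Matrix (Fin dA × Fin dB) (Fin dA × Fin dB) ℂ)
    (hρ : ρ = ∑ j, ((p j : ℂ)) • ((α j) ⊗ₖ (β j)))
    (hρB : (ptraceA ρ).PosDef) :
    ((tildeRho ρ * tildeRho ρ).trace).re ≤ 1 := by
  have htrace : ρ.trace = 1 := by
    simp only [hρ, trace_sum, trace_smul, trace_kronecker, hαtr, hβtr, smul_eq_mul, mul_one]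
    exact_mod_cast hpsum
  have hsep := hρ ▸ sum_smul_kronecker_mem_separableCone hp hα hβ
  exact (Complex.le_def.mp (htrace ▸ separable_h2_nonneg_general hsep hρB)).1

end
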